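/- For all M > 0 and λ > 0 there exists a constant C > 0 such that for all reals s < t with t − s ≤ 1 and all x, y ≥ −M, |A_{s,t}(x,y) − A_{t,t}(x,y) + φ_{t−s}(x,y)| ≤ C (t−s) e^{−λ(x+y)}. -/

import Mathlib

/-!
Write `α = t - s > 0`. The proof rests on two facts about the Airy function.

*Contour representation.* For every `η > 0`,
`Ai x = (1/2π) ∫ exp(i((t+iη)³/3 + x(t+iη))) dt` (`Ai_eq`). It follows from Cauchy's theorem on
the rectangle `[-R, R] × [0, η]`, whose vertical sides vanish as `R → ∞`. On the shifted line the
integrand has Gaussian modulus, so `|Ai x| ≤ C_η e^{-ηx}` for all real `x` and all `η > 0`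
(`Ai_bound`).

*Laplace transform of a product.* By the representation with `η = α/2`, the function
`z ↦ e^{αz/2} Ai(x+z)` is the Fourier transform of a continuous integrable function, and it is
itself integrable by the exponential bounds. Self-adjointness of the Fourier transform and Fourier
inversion turn `∫ e^{αz} Ai(x+z) Ai(y+z) dz` into a Gaussian integral, in which the cubic phases
cancel; its value is `φ_α(x,y)` (`integral_exp_Ai_Ai`).

Consequently `A_{s,t} - A_{t,t} + φ_α = ∫_0^∞ (e^{αz} - 1) Ai(x+z) Ai(y+z) dz` (`extAiry_diff`).
Since `e^{αz} - 1 ≤ α e^{2z}` for `α ≤ 1`, the bound `|Ai u| ≤ D e^{-(λ+1)u}` gives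
`α D² e^{-(λ+1)(x+y)} / (2λ)`, and `e^{-(x+y)} ≤ e^{2M}` absorbs the surplus factor.
-/

open MeasureTheory Real Filter

/-- The Airy function `Ai(x) = (1/π)·lim_{R→∞} ∫_0^R cos(t³/3 + x·t) dt`. -/
noncomputable def Ai (x : ℝ) : ℝ :=
  (1 / Real.pi) * limUnder Filter.atTop
    (fun R : ℝ => ∫ t in (0:ℝ)..R, Real.cos (t ^ 3 / 3 + x * t))

/-- The extended Airy kernel `A_{s,t}(x,y)`. -/
noncomputable def extAiry (s t x y : ℝ) : ℝ :=
  if t ≤ s then ∫ z in Set.Ioi (0:ℝ), Real.exp (-z * (s - t)) * Ai (x + z) * Ai (y + z)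
  else -∫ z in Set.Iio (0:ℝ), Real.exp (z * (t - s)) * Ai (x + z) * Ai (y + z)

/-- For `α > 0`, `φ_α(x,y) = (4πα)^{−1/2}·exp(−(x−y)²/(4α) − α(x+y)/2 + α³/12)`. -/
noncomputable def phiK (α x y : ℝ) : ℝ :=
  (1 / Real.sqrt (4 * Real.pi * α)) *
    Real.exp (-(x - y) ^ 2 / (4 * α) - α * (x + y) / 2 + α ^ 3 / 12)

open scoped FourierTransform Topology

/-! ### The contour representation -/

/-- The Airy integrand `exp(i(w³/3 + xw))` at `w = t + iη`, on the horizontal line `Im w = η`. -/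
noncomputable def airyG (η x t : ℝ) : ℂ :=
  Complex.exp (Complex.I * ((t + η * Complex.I) ^ 3 / 3 + x * (t + η * Complex.I)))

lemma norm_airyG (η x t : ℝ) :
    ‖airyG η x t‖ = Real.exp (η ^ 3 / 3 - x * η) * Real.exp (-η * t ^ 2) := by
  have h : Complex.I * ((t + η * Complex.I) ^ 3 / 3 + x * (t + η * Complex.I))
      = ((η ^ 3 / 3 - x * η + -η * t ^ 2 : ℝ) : ℂ)
        + ((t ^ 3 / 3 - η ^ 2 * t + x * t : ℝ) : ℂ) * Complex.I := by
    push_cast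
    linear_combination (η * t ^ 2 + η ^ 2 * t * Complex.I
      + η ^ 3 / 3 * (Complex.I ^ 2 - 1) + x * η : ℂ) * Complex.I_sq
  rw [airyG, h, Complex.norm_exp, ← Real.exp_add]
  simp [-Complex.ofReal_add, -Complex.ofReal_mul, -Complex.ofReal_sub, -Complex.ofReal_div,
    -Complex.ofReal_pow, -Complex.ofReal_neg]

lemma continuous_airyG (η x : ℝ) : Continuous (airyG η x) := by
  unfold airyG
  fun_prop

lemma integrable_airyG {η : ℝ} (hη : 0 < η) (x : ℝ) : Integrable (airyG η x) := by
  refine (((integrable_exp_neg_mul_sq hη).const_mul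
    (Real.exp (η ^ 3 / 3 - x * η))).mono' (continuous_airyG η x).aestronglyMeasurable ?_)
  exact Eventually.of_forall fun t => (norm_airyG η x t).le

/-- Translation in `x` is modulation in `t`, up to the factor `e^{-ηz}` from the shifted line. -/
lemma airyG_add (η x z t : ℝ) :
    airyG η (x + z) t =
      Real.exp (-(η * z)) * (Complex.exp (Complex.I * (z * t)) * airyG η x t) := by
  unfold airyG
  rw [Complex.ofReal_exp, ← Complex.exp_add, ← Complex.exp_add]
  congr 1
  push_cast
  linear_combination (z * η : ℂ) * Complex.I_sq

/-- On the real line the imaginary parts at `t` and `-t` cancel. -/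
lemma integral_airyG_zero (x R : ℝ) :
    ∫ t in (-R)..R, airyG 0 x t
      = ((2 * ∫ t in (0:ℝ)..R, Real.cos (t ^ 3 / 3 + x * t) : ℝ) : ℂ) := by
  have hc := continuous_airyG 0 x
  have hc' : Continuous fun t => airyG 0 x (-t) := hc.comp continuous_neg
  rw [← intervalIntegral.integral_add_adjacent_intervals (b := 0)
    (hc.intervalIntegrable _ _) (hc.intervalIntegrable _ _)]
  have h1 : ∫ t in (-R)..0, airyG 0 x t = ∫ t in (0:ℝ)..R, airyG 0 x (-t) := by
    rw [intervalIntegral.integral_comp_neg]; simp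
  rw [h1, ← intervalIntegral.integral_add (hc'.intervalIntegrable _ _) (hc.intervalIntegrable _ _),
    ← intervalIntegral.integral_const_mul, ← intervalIntegral.integral_ofReal]
  congr 1
  ext t
  push_cast
  rw [Complex.two_cos]
  unfold airyG
  rw [add_comm]
  congr 2 <;> push_cast <;> ring

/-- The vertical sides of the rectangle contribute nothing in the limit. -/
lemma tendsto_vertical {η : ℝ} (hη : 0 < η) (x ε : ℝ) (hε : ε ^ 2 = 1) :
    Tendsto (fun R : ℝ => ∫ v in (0:ℝ)..η, airyG v x (ε * R)) atTop (𝓝 0) := by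
  have h0 : (0 : ℂ) = ∫ v in (0:ℝ)..η, (0 : ℂ) := by simp
  rw [h0]
  refine intervalIntegral.tendsto_integral_filter_of_dominated_convergence
    (fun v => Real.exp (v ^ 3 / 3 - x * v)) ?_ ?_ ?_ ?_
  · refine Eventually.of_forall fun R => Continuous.aestronglyMeasurable ?_
    unfold airyG
    fun_prop
  · refine Eventually.of_forall fun R => Eventually.of_forall fun v hv => ?_
    rw [Set.uIoc_of_le hη.le] at hv
    rw [norm_airyG]
    refine mul_le_of_le_one_right (Real.exp_pos _).le (Real.exp_le_one_iff.2 ?_)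
    have := mul_nonneg hv.1.le (sq_nonneg (ε * R))
    linarith
  · exact Continuous.intervalIntegrable (by fun_prop) _ _
  · refine Eventually.of_forall fun v hv => ?_
    rw [Set.uIoc_of_le hη.le] at hv
    rw [tendsto_zero_iff_norm_tendsto_zero]
    simp_rw [norm_airyG, mul_pow, hε, one_mul]
    rw [← mul_zero (Real.exp (v ^ 3 / 3 - x * v))]
    refine Tendsto.const_mul _ (Real.tendsto_exp_atBot.comp ?_)
    exact (tendsto_pow_atTop two_ne_zero).const_mul_atTop_of_neg (by linarith [hv.1])

/-- Cauchy's theorem on the rectangle `[-R, R] × [0, η]`. -/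
lemma airy_rect (η x R : ℝ) :
    ∫ t in (-R)..R, airyG 0 x t = (∫ t in (-R)..R, airyG η x t)
      - Complex.I * (∫ v in (0:ℝ)..η, airyG v x (1 * R))
      + Complex.I * (∫ v in (0:ℝ)..η, airyG v x (-1 * R)) := by
  have h := Complex.integral_boundary_rect_eq_zero_of_differentiableOn
    (fun w : ℂ => Complex.exp (Complex.I * (w ^ 3 / 3 + x * w))) ((-R : ℝ) : ℂ) (⟨R, η⟩ : ℂ)
    (Differentiable.differentiableOn (by fun_prop))
  simp only [Complex.ofReal_re, Complex.ofReal_im, smul_eq_mul] at h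
  simp only [airyG, one_mul, neg_mul]
  linear_combination h

lemma tendsto_airy {η : ℝ} (hη : 0 < η) (x : ℝ) :
    Tendsto (fun R : ℝ => ((2 * ∫ t in (0:ℝ)..R, Real.cos (t ^ 3 / 3 + x * t) : ℝ) : ℂ)) atTop
      (𝓝 (∫ t, airyG η x t)) := by
  simp_rw [← integral_airyG_zero, airy_rect η x]
  have h := ((intervalIntegral_tendsto_integral (integrable_airyG hη x) tendsto_neg_atTop_atBot
    tendsto_id).sub ((tendsto_vertical hη x 1 (by norm_num)).const_mul Complex.I)).add
    ((tendsto_vertical hη x (-1) (by norm_num)).const_mul Complex.I)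
  simpa using h

/-- The contour representation of the Airy function. -/
lemma Ai_eq {η : ℝ} (hη : 0 < η) (x : ℝ) :
    (Ai x : ℂ) = (1 / (2 * Real.pi) : ℝ) * ∫ t, airyG η x t := by
  have h := tendsto_airy hη x
  have hre := (Complex.continuous_re.tendsto _).comp h
  -- the approximants are real, hence so is the limit
  have hL := tendsto_nhds_unique ((Complex.continuous_ofReal.tendsto _).comp hre) h
  have h2 : Tendsto (fun R : ℝ => ∫ t in (0:ℝ)..R, Real.cos (t ^ 3 / 3 + x * t)) atTop
      (𝓝 ((1 / 2) * (∫ t, airyG η x t).re)) := by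
    refine (hre.const_mul (1 / 2)).congr fun R => ?_
    simp only [Function.comp, Complex.ofReal_re]
    ring
  rw [Ai, h2.limUnder_eq, ← hL]
  push_cast
  simp only [Complex.ofReal_re]
  field_simp

/-- Exponential decay of every rate `η`, valid on the whole real line. -/
lemma Ai_bound {η : ℝ} (hη : 0 < η) : ∃ C > 0, ∀ x, |Ai x| ≤ C * Real.exp (-η * x) := by
  refine ⟨(1 / (2 * Real.pi)) * (Real.exp (η ^ 3 / 3) * √(Real.pi / η)), by positivity,
    fun x => ?_⟩
  have h := norm_integral_le_integral_norm (μ := volume) (airyG η x)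
  simp_rw [norm_airyG, integral_const_mul, integral_gaussian] at h
  rw [← Real.norm_eq_abs, ← Complex.norm_real, Ai_eq hη, norm_mul, Complex.norm_real,
    Real.norm_of_nonneg (by positivity)]
  calc _ ≤ (1 / (2 * Real.pi)) * (Real.exp (η ^ 3 / 3 - x * η) * √(Real.pi / η)) := by gcongr
    _ = _ := by
      rw [show η ^ 3 / 3 - x * η = η ^ 3 / 3 + -η * x by ring, Real.exp_add]
      ring

/-! ### The Laplace transform of a product of Airy functions -/

/-- The density, a rescaling of `airyG` to the convention `𝓕 f z = ∫ e^{-2πivz} f v dv`,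
whose Fourier transform is `z ↦ e^{ηz} Ai(x+z)`. -/
noncomputable def airyK (η x v : ℝ) : ℂ := airyG η x (-(2 * Real.pi) * v)

lemma continuous_airyK (η x : ℝ) : Continuous (airyK η x) :=
  (continuous_airyG η x).comp (by fun_prop)

lemma integrable_airyK {η : ℝ} (hη : 0 < η) (x : ℝ) : Integrable (airyK η x) :=
  (integrable_airyG hη x).comp_mul_left' (by simp [Real.pi_ne_zero])

lemma fourier_airyK {η : ℝ} (hη : 0 < η) (x z : ℝ) :
    𝓕 (airyK η x) z = ((Real.exp (η * z) * Ai (x + z) : ℝ) : ℂ) := by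
  rw [Real.fourier_real_eq_integral_exp_smul]
  have h1 : ∀ v : ℝ, Complex.exp (((-2 * Real.pi * v * z : ℝ) : ℂ) * Complex.I) • airyK η x v
      = (fun t : ℝ => Complex.exp (Complex.I * (z * t)) * airyG η x t) (-(2 * Real.pi) * v) := by
    intro v
    simp only [airyK, smul_eq_mul]
    congr 2
    push_cast
    ring
  rw [integral_congr_ae (Eventually.of_forall h1), Measure.integral_comp_mul_left
    (fun t : ℝ => Complex.exp (Complex.I * (z * t)) * airyG η x t), Complex.ofReal_mul, Ai_eq hη]
  simp_rw [airyG_add]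
  rw [integral_const_mul]
  have h2 : |(-(2 * Real.pi))⁻¹| = 1 / (2 * Real.pi) := by
    rw [abs_inv, abs_neg, abs_of_pos (by positivity), one_div]
  have h3 : (Real.exp (η * z) : ℂ) * (Real.exp (-(η * z)) : ℂ) = 1 := by
    rw [← Complex.ofReal_mul, ← Real.exp_add]; simp
  rw [h2, Complex.real_smul]
  linear_combination (-((1 / (2 * Real.pi) : ℝ) : ℂ) *
    ∫ t : ℝ, Complex.exp (Complex.I * (z * t)) * airyG η x t) * h3

/-- The function is the Fourier transform of an integrable function. -/
lemma continuous_exp_Ai {η : ℝ} (hη : 0 < η) (x : ℝ) :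
    Continuous fun z => Real.exp (η * z) * Ai (x + z) := by
  have h : Continuous (𝓕 (airyK η x)) :=
    VectorFourier.fourierIntegral_continuous Real.continuous_fourierChar
      (by exact continuous_inner) (integrable_airyK hη x)
  have h2 := Complex.continuous_re.comp h
  refine h2.congr fun z => ?_
  simp [fourier_airyK hη, -Complex.ofReal_mul]

lemma continuous_Ai : Continuous Ai := by
  have h := (Real.continuous_exp.comp continuous_neg).mul (continuous_exp_Ai one_pos 0)
  refine h.congr fun z => ?_
  simp [← mul_assoc, ← Real.exp_add]

/-- A continuous function bounded by two exponentials, one decaying at each end, is integrable. -/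
lemma integrable_of_two_exp {f : ℝ → ℝ} (hf : Continuous f) {a b A B : ℝ} (ha : 0 < a)
    (hb : 0 < b) (h1 : ∀ z, |f z| ≤ A * Real.exp (-a * z))
    (h2 : ∀ z, |f z| ≤ B * Real.exp (b * z)) : Integrable f := by
  rw [← integrableOn_univ, ← Set.Iic_union_Ioi (a := (0:ℝ))]
  refine IntegrableOn.union ?_ ?_
  · exact ((integrableOn_exp_mul_Iic hb 0).const_mul B).mono' hf.aestronglyMeasurable
      (Eventually.of_forall h2)
  · exact ((integrableOn_exp_mul_Ioi (neg_lt_zero.2 ha) 0).const_mul A).mono'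
      hf.aestronglyMeasurable (Eventually.of_forall h1)

/-- `Ai_bound` with exponents `2η` and `η/2` gives decay at `+∞` and `-∞` respectively. -/
lemma integrable_exp_Ai {η : ℝ} (hη : 0 < η) (x : ℝ) :
    Integrable fun z => Real.exp (η * z) * Ai (x + z) := by
  obtain ⟨A, hA, h1⟩ := Ai_bound (η := 2 * η) (by positivity)
  obtain ⟨B, hB, h2⟩ := Ai_bound (η := η / 2) (by positivity)
  refine integrable_of_two_exp (continuous_exp_Ai hη x) (a := η) (b := η / 2)
    (A := A * Real.exp (-(2 * η) * x)) (B := B * Real.exp (-(η / 2) * x)) hη (by positivity) ?_ ?_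
  all_goals
    intro z
    rw [abs_mul, abs_of_pos (Real.exp_pos _)]
  · refine (mul_le_mul_of_nonneg_left (h1 _) (Real.exp_pos _).le).trans_eq ?_
    rw [mul_left_comm, mul_assoc, ← Real.exp_add, ← Real.exp_add]
    ring_nf
  · refine (mul_le_mul_of_nonneg_left (h2 _) (Real.exp_pos _).le).trans_eq ?_
    rw [mul_left_comm, mul_assoc, ← Real.exp_add, ← Real.exp_add]
    ring_nf

lemma integrable_fourier_airyK {η : ℝ} (hη : 0 < η) (x : ℝ) : Integrable (𝓕 (airyK η x)) := by
  have : 𝓕 (airyK η x) = fun z => ((Real.exp (η * z) * Ai (x + z) : ℝ) : ℂ) :=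
    funext fun z => fourier_airyK hη x z
  rw [this]
  exact (integrable_exp_Ai hη x).ofReal

lemma fourier_fourier_airyK {η : ℝ} (hη : 0 < η) (x v : ℝ) :
    𝓕 (𝓕 (airyK η x)) v = airyK η x (-v) := by
  have h := congrFun ((continuous_airyK η x).fourierInv_fourier_eq (integrable_airyK hη x)
    (integrable_fourier_airyK hη x)) (-v)
  rw [Real.fourierInv_eq_fourier_neg, neg_neg] at h
  exact h

/-- The cubic phases at `v` and `-v` cancel, leaving a Gaussian. -/
lemma airyK_mul (η x y v : ℝ) :
    airyK η x v * airyK η y (-v) = Complex.exp (((-(8 * η * Real.pi ^ 2) : ℝ) : ℂ) * v ^ 2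
      + (2 * Real.pi * (y - x) * Complex.I) * v
      + ((2 * η ^ 3 / 3 - η * (x + y) : ℝ) : ℂ)) := by
  unfold airyK airyG
  rw [← Complex.exp_add]
  congr 1
  push_cast
  linear_combination (8 * η * Real.pi ^ 2 * v ^ 2 + 2 * η ^ 3 / 3 * (Complex.I ^ 2 - 1)
    + η * (x + y) : ℂ) * Complex.I_sq

/-- The two-sided Laplace transform of a product of Airy functions is the heat-type kernel. -/
lemma integral_exp_Ai_Ai {α : ℝ} (hα : 0 < α) (x y : ℝ) :
    ∫ z, Real.exp (z * α) * Ai (x + z) * Ai (y + z) = phiK α x y := by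
  have hη : 0 < α / 2 := by positivity
  have hP : ∫ z, 𝓕 (airyK (α / 2) x) z * 𝓕 (airyK (α / 2) y) z
      = ∫ v, airyK (α / 2) x v * 𝓕 (𝓕 (airyK (α / 2) y)) v := by
    simpa using! (VectorFourier.integral_fourierIntegral_smul_eq_flip (L := innerₗ ℝ)
      Real.continuous_fourierChar continuous_inner (integrable_airyK hη x)
      (integrable_fourier_airyK hη y))
  simp_rw [fourier_fourier_airyK hη, airyK_mul, fourier_airyK hη, ← Complex.ofReal_mul] at hP
  rw [integral_cexp_quadratic (by
    rw [Complex.ofReal_re]; have := Real.pi_pos; rw [neg_lt_zero]; positivity),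
    integral_complex_ofReal] at hP
  have h1 : ∀ z, Real.exp (z * α) * Ai (x + z) * Ai (y + z)
      = Real.exp (α / 2 * z) * Ai (x + z) * (Real.exp (α / 2 * z) * Ai (y + z)) := by
    intro z
    rw [show z * α = α / 2 * z + α / 2 * z by ring, Real.exp_add]
    ring
  simp_rw [h1]
  apply Complex.ofReal_injective
  rw [hP, phiK, Complex.ofReal_mul, Complex.ofReal_exp]
  have hpi : (Real.pi : ℂ) ≠ 0 := by exact_mod_cast Real.pi_ne_zero
  have hα' : (α : ℂ) ≠ 0 := by exact_mod_cast hα.ne'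
  congr 1
  · rw [← Complex.ofReal_neg, neg_neg, ← Complex.ofReal_div,
      show (1 / 2 : ℂ) = ((1 / 2 : ℝ) : ℂ) by push_cast; rfl,
      ← Complex.ofReal_cpow (by positivity), ← Real.sqrt_eq_rpow]
    congr 1
    rw [one_div, ← Real.sqrt_inv]
    congr 1
    field_simp
    norm_num
  · congr 1
    push_cast
    field_simp
    ring_nf
    simp only [Complex.I_sq]
    ring

lemma integrable_exp_Ai_Ai {α : ℝ} (hα : 0 < α) (x y : ℝ) :
    Integrable fun z => Real.exp (z * α) * Ai (x + z) * Ai (y + z) := by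
  obtain ⟨A, hA, h1⟩ := Ai_bound hα
  obtain ⟨B, hB, h2⟩ := Ai_bound (η := α / 4) (by positivity)
  have key : ∀ D η : ℝ, (∀ x, |Ai x| ≤ D * Real.exp (-η * x)) → ∀ z,
      |Real.exp (z * α) * Ai (x + z) * Ai (y + z)|
        ≤ D * D * Real.exp (-η * (x + y)) * Real.exp ((α - 2 * η) * z) := by
    intro D η h z
    rw [abs_mul, abs_mul, abs_of_pos (Real.exp_pos _), mul_assoc]
    refine (mul_le_mul_of_nonneg_left (mul_le_mul (h _) (h _) (abs_nonneg _)
      ((abs_nonneg _).trans (h _))) (Real.exp_pos _).le).trans_eq ?_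
    rw [show (α - 2 * η) * z = z * α + -η * z + -η * z by ring,
      show -η * (x + y) = -η * x + -η * y by ring, mul_add, mul_add]
    simp only [Real.exp_add]
    ring
  refine integrable_of_two_exp (a := α) (b := α / 2) (A := A * A * Real.exp (-α * (x + y)))
    (B := B * B * Real.exp (-(α / 4) * (x + y))) ?_ hα (by positivity) ?_ ?_
  · have := continuous_Ai
    fun_prop
  · intro z
    refine (key _ _ h1 z).trans_eq ?_
    ring_nf
  · intro z
    refine (key _ _ h2 z).trans_eq ?_
    ring_nf

/-- Dominated on the half line by the integrand of `integrable_exp_Ai_Ai` with `α = 1`. -/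
lemma integrableOn_Ai_Ai (x y : ℝ) :
    IntegrableOn (fun z => Ai (x + z) * Ai (y + z)) (Set.Ioi 0) := by
  have hc := continuous_Ai
  have hcont : Continuous fun z => Ai (x + z) * Ai (y + z) := by fun_prop
  refine Integrable.mono (integrable_exp_Ai_Ai one_pos x y).integrableOn hcont.aestronglyMeasurable ?_
  refine (ae_restrict_iff' measurableSet_Ioi).2 (Eventually.of_forall fun z hz => ?_)
  rw [mul_assoc, norm_mul (Real.exp _)]
  refine le_mul_of_one_le_left (norm_nonneg _) ?_
  rw [Real.norm_of_nonneg (Real.exp_pos _).le]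
  have : (0:ℝ) < z := hz
  exact Real.one_le_exp (by linarith)

/-! ### The kernel difference -/

lemma extAiry_diff {s t : ℝ} (hst : s < t) (x y : ℝ) :
    extAiry s t x y - extAiry t t x y + phiK (t - s) x y
      = ∫ z in Set.Ioi (0:ℝ), (Real.exp (z * (t - s)) - 1) * (Ai (x + z) * Ai (y + z)) := by
  have hα : 0 < t - s := sub_pos.2 hst
  have hI := integrable_exp_Ai_Ai hα x y
  rw [extAiry, extAiry, if_neg (not_le.2 hst), if_pos le_rfl, ← integral_exp_Ai_Ai hα,
    ← intervalIntegral.integral_Iic_add_Ioi (b := 0) hI.integrableOn hI.integrableOn,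
    integral_Iic_eq_integral_Iio]
  have h1 : ∀ z, (Real.exp (z * (t - s)) - 1) * (Ai (x + z) * Ai (y + z))
      = Real.exp (z * (t - s)) * Ai (x + z) * Ai (y + z) - Ai (x + z) * Ai (y + z) := by
    intro z; ring
  simp_rw [h1]
  rw [integral_sub hI.integrableOn (integrableOn_Ai_Ai x y)]
  simp only [sub_self, mul_zero, Real.exp_zero, one_mul]
  ring

/-- For all `M > 0` and `λ > 0` there exists `C > 0` such that for all reals `s < t` with
`t − s ≤ 1` and all `x, y ≥ −M`,
`|A_{s,t}(x,y) − A_{t,t}(x,y) + φ_{t−s}(x,y)| ≤ C (t−s) e^{−λ(x+y)}`. -/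
theorem extAiry_short_time_approx (M lam : ℝ) (hM : 0 < M) (hlam : 0 < lam) :
    ∃ C > 0, ∀ s t x y : ℝ, s < t → t - s ≤ 1 → -M ≤ x → -M ≤ y →
      |extAiry s t x y - extAiry t t x y + phiK (t - s) x y| ≤
        C * (t - s) * Real.exp (-lam * (x + y)) := by
  obtain ⟨D, hD, hAi⟩ := Ai_bound (η := lam + 1) (by positivity)
  refine ⟨D * D * Real.exp (2 * M) / (2 * lam), by positivity, fun s t x y hst ht hx hy => ?_⟩
  have hα : 0 < t - s := sub_pos.2 hst
  rw [extAiry_diff hst, ← Real.norm_eq_abs]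
  set α := t - s with hαdef
  have hb : ∀ z ∈ Set.Ioi (0:ℝ),
      ‖(Real.exp (z * α) - 1) * (Ai (x + z) * Ai (y + z))‖
        ≤ α * (D * D * Real.exp (-(lam + 1) * (x + y))) * Real.exp (-(2 * lam) * z) := by
    intro z hz
    have hz : (0:ℝ) < z := hz
    -- `e^{αz} - 1 ≤ αz e^{αz} ≤ α e^{2z}`
    have h1 : Real.exp (z * α) - 1 ≤ α * Real.exp (2 * z) := by
      have e1 : Real.exp (z * α) - 1 ≤ z * α * Real.exp (z * α) := by
        have := Real.add_one_le_exp (-(z * α))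
        have h := mul_le_mul_of_nonneg_right this (Real.exp_pos (z * α)).le
        rw [← Real.exp_add, neg_add_cancel, Real.exp_zero] at h
        linarith
      have e2 : Real.exp (z * α) ≤ Real.exp z := Real.exp_le_exp.2 (by nlinarith)
      have e3 : z ≤ Real.exp z := by linarith [Real.add_one_le_exp z]
      calc _ ≤ z * α * Real.exp (z * α) := e1
        _ ≤ Real.exp z * α * Real.exp z := by gcongr
        _ = _ := by rw [two_mul, Real.exp_add]; ring
    have h0 : 0 ≤ Real.exp (z * α) - 1 := by
      linarith [Real.one_le_exp (mul_pos hz hα).le]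
    rw [norm_mul, norm_mul, Real.norm_of_nonneg h0, Real.norm_eq_abs, Real.norm_eq_abs]
    calc _ ≤ α * Real.exp (2 * z) * (D * Real.exp (-(lam + 1) * (x + z))
            * (D * Real.exp (-(lam + 1) * (y + z)))) := by
          gcongr
          · exact hAi _
          · exact hAi _
      _ = _ := by
          rw [show -(2 * lam) * z = 2 * z + -(lam + 1) * z + -(lam + 1) * z by ring,
            mul_add _ x z, mul_add _ y z, mul_add _ x y]
          simp only [Real.exp_add]
          ring
  have hint := (integrableOn_exp_mul_Ioi (a := -(2 * lam)) (by linarith) 0).const_mul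
    (α * (D * D * Real.exp (-(lam + 1) * (x + y))))
  refine (norm_integral_le_of_norm_le hint
    ((ae_restrict_iff' measurableSet_Ioi).2 (Eventually.of_forall hb))).trans ?_
  rw [integral_const_mul, integral_exp_mul_Ioi (by linarith)]
  have hexp : Real.exp (-(lam + 1) * (x + y)) ≤ Real.exp (2 * M) * Real.exp (-lam * (x + y)) := by
    rw [← Real.exp_add]
    exact Real.exp_le_exp.2 (by linarith)
  calc _ = α * D * D / (2 * lam) * Real.exp (-(lam + 1) * (x + y)) := by
        simp only [mul_zero, Real.exp_zero]
        field_simp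
    _ ≤ α * D * D / (2 * lam) * (Real.exp (2 * M) * Real.exp (-lam * (x + y))) := by gcongr
    _ = _ := by ring
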